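/- Let h > 0 be a real number and let φ_n : [0, nh] → [0,∞), for n ≥ 1, be a sequence of bounded concave functions such that φ_{n+m} ≤ φ_n ⊗ φ_m for all n, m ≥ 1. Then the sequence of functions x ↦ (1/n) φ_n(nx) on [0, h] converges uniformly, as n → ∞, to a concave function on [0, h] which equals the pointwise infimum over n ≥ 1 of the functions x ↦ (1/n) φ_n(nx). -/

import Mathlib

/-- The tropical convolution of `f : [0,h₁] → ℝ` and `g : [0,h₂] → ℝ`:
`(f ⊗ g)(x) = sup { f a + g b : 0 ≤ a ≤ h₁, 0 ≤ b ≤ h₂, a + b = x }`. -/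
noncomputable def tropConv (h₁ h₂ : ℝ) (f g : ℝ → ℝ) : ℝ → ℝ := fun x =>
  sSup {y | ∃ a b : ℝ, 0 ≤ a ∧ a ≤ h₁ ∧ 0 ≤ b ∧ b ≤ h₂ ∧ a + b = x ∧ y = f a + g b}

/-!
Write `F n x = φ n (n x) / n`. Tropical subadditivity bounds `(n + m) F (n + m) x` by the supremum
of `n F n u + m F m v` over the decompositions `n u + m v = (n + m) x`. Fix `n` and choose `D` with
`r F r ≤ r F n + D` for `1 ≤ r ≤ n`. Splitting off `n` and using the concavity of `F n`, induction
on `N` gives `N F N ≤ N F n + D` for all `N`, so `F N x` tends to the infimum `ψ x`, from above.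

Convergence from above of concave functions on `[a, b]` is uniform. To the right of a point `x < b`
and with `c ≤ ψ`, the functions `y ↦ (F n y - c) / (b - y)` are increasing in `y`. A bound at one
`z > x` where `(ψ z - c) / (b - z)` almost attains its infimum over `(x, b)` thus controls all of
`(x, z]`. Reflection handles the left of `x`, and compactness concludes.
-/

open Filter Set Topology

section ConcaveOn

variable {E : Type*} [AddCommGroup E] [Module ℝ E] {s : Set E} {g : E → ℝ}

lemma mul_add_mul_le_of_concaveOn (hg : ConcaveOn ℝ s g) {p q : ℝ} (hp : 0 < p) (hq : 0 < q)
    {u v x : E} (hu : u ∈ s) (hv : v ∈ s) (hx : p • u + q • v = (p + q) • x) :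
    p * g u + q * g v ≤ (p + q) * g x := by
  have hpq : 0 < p + q := add_pos hp hq
  have hweights : p / (p + q) + q / (p + q) = 1 := by rw [← add_div, div_self hpq.ne']
  have hcomb : (p / (p + q)) • u + (q / (p + q)) • v = x := by
    rw [div_eq_inv_mul, div_eq_inv_mul, mul_smul, mul_smul, ← smul_add, hx, inv_smul_smul₀ hpq.ne']
  have hle : p / (p + q) * g u + q / (p + q) * g v ≤ g x := by
    simpa only [hcomb, smul_eq_mul] using
      hg.2 hu hv (div_nonneg hp.le hpq.le) (div_nonneg hq.le hpq.le) hweights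
  calc p * g u + q * g v = (p + q) * (p / (p + q) * g u + q / (p + q) * g v) := by field_simp
    _ ≤ (p + q) * g x := by gcongr

lemma concaveOn_of_isGLB {ι : Type*} {f : ι → E → ℝ} {P : ι → Prop} (hs : Convex ℝ s)
    (hf : ∀ i, P i → ConcaveOn ℝ s (f i))
    (hg : ∀ x ∈ s, IsGLB {y | ∃ i, P i ∧ y = f i x} (g x)) : ConcaveOn ℝ s g := by
  refine ⟨hs, fun x hx y hy a b ha hb hab ↦ (hg _ (hs hx hy ha hb hab)).2 ?_⟩
  rintro _ ⟨i, hi, rfl⟩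
  calc a • g x + b • g y ≤ a • f i x + b • f i y := by
        gcongr
        exacts [(hg x hx).1 ⟨i, hi, rfl⟩, (hg y hy).1 ⟨i, hi, rfl⟩]
    _ ≤ f i (a • x + b • y) := (hf i hi).2 hx hy ha hb hab

end ConcaveOn

section Interval

variable {f : ℝ → ℝ} {a b : ℝ}

lemma concaveOn_comp_neg_Icc (hf : ConcaveOn ℝ (Icc a b) f) :
    ConcaveOn ℝ (Icc (-b) (-a)) (fun x ↦ f (-x)) := by
  simpa only [LinearMap.coe_neg, LinearMap.id_coe, Function.comp_def, Pi.neg_apply, id,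
    Set.preimage, neg_mem_Icc_iff, ofPred_mem_eq] using
    hf.comp_linearMap (-LinearMap.id : ℝ →ₗ[ℝ] ℝ)

lemma isBounded_image_Icc_of_concaveOn (hf : ConcaveOn ℝ (Icc a b) f) :
    Bornology.IsBounded (f '' Icc a b) := by
  have hmin : ∀ x ∈ Icc a b, min (f a) (f b) ≤ f x := fun x hx ↦
    hf.min_le_of_mem_Icc (left_mem_Icc.2 (hx.1.trans hx.2)) (right_mem_Icc.2 (hx.1.trans hx.2)) hx
  refine isBounded_iff_bddBelow_bddAbove.2
    ⟨⟨min (f a) (f b), forall_mem_image.2 hmin⟩,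
      ⟨2 * f ((a + b) / 2) - min (f a) (f b), forall_mem_image.2 fun x hx ↦ ?_⟩⟩
  have hx' : a + b - x ∈ Icc a b := ⟨by linarith [hx.2], by linarith [hx.1]⟩
  have hmid : 1 * f x + 1 * f (a + b - x) ≤ (1 + 1) * f ((a + b) / 2) :=
    mul_add_mul_le_of_concaveOn hf one_pos one_pos hx hx' (by simp only [smul_eq_mul]; ring)
  linarith [hmin _ hx']

lemma monotoneOn_sub_div_sub_of_concaveOn {c : ℝ} (hf : ConcaveOn ℝ (Icc a b) f) (hc : c ≤ f b) :
    MonotoneOn (fun y ↦ (f y - c) / (b - y)) (Ico a b) := by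
  intro y hy z hz hyz
  have hb : b ∈ Icc a b := right_mem_Icc.2 (hy.1.trans hy.2.le)
  have hslope : slope f b z ≤ slope f b y :=
    hf.antitoneOn_slope_lt hb ⟨Ico_subset_Icc_self hy, hy.2⟩ ⟨Ico_subset_Icc_self hz, hz.2⟩ hyz
  have hsplit : ∀ w, (f w - c) / (b - w) = (f b - c) / (b - w) - slope f b w := fun w ↦ by
    rw [slope_def_field, ← neg_sub b w, div_neg, sub_neg_eq_add, ← add_div]
    ring
  have hbz : 0 < b - z := sub_pos.2 hz.2
  have hbc : 0 ≤ f b - c := sub_nonneg.2 hc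
  simp only [hsplit]
  exact sub_le_sub (div_le_div_of_nonneg_left hbc hbz (sub_le_sub_left hyz b)) hslope

end Interval

section UniformConvergence

variable {ι : Type*} {l : Filter ι} {F : ι → ℝ → ℝ} {ψ : ℝ → ℝ} {a b : ℝ}

lemma eventually_lt_add_nhdsGT_of_monotoneOn (hab : a < b)
    (hF : ∀ᶠ i in l, MonotoneOn (F i) (Ioo a b)) (hψ : BddBelow (ψ '' Ioo a b))
    (hlim : ∀ y ∈ Ioo a b, Tendsto (F · y) l (𝓝 (ψ y))) {ε : ℝ} (hε : 0 < ε) :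
    ∀ᶠ p in l ×ˢ 𝓝[>] a, F p.1 p.2 < ψ p.2 + ε := by
  obtain ⟨_, ⟨z, hz, rfl⟩, hzinf⟩ :=
    Real.lt_sInf_add_pos ((nonempty_Ioo.2 hab).image ψ) (half_pos hε)
  have hFz : ∀ᶠ i in l, F i z < ψ z + ε / 2 :=
    (hlim z hz).eventually_lt_const (lt_add_of_pos_right _ (half_pos hε))
  filter_upwards [(hF.and hFz).prod_mk (Ioc_mem_nhdsGT hz.1)] with ⟨i, y⟩ ⟨⟨hmono, hiz⟩, hy⟩
  have hy' : y ∈ Ioo a b := ⟨hy.1, hy.2.trans_lt hz.2⟩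
  calc F i y ≤ F i z := hmono hy' hz hy.2
    _ < sInf (ψ '' Ioo a b) + ε := by linarith
    _ ≤ ψ y + ε := by gcongr; exact csInf_le hψ (mem_image_of_mem ψ hy')

lemma min_le_of_tendsto_concaveOn [l.NeBot] (hF : ∀ᶠ i in l, ConcaveOn ℝ (Icc a b) (F i))
    (hlim : ∀ x ∈ Icc a b, Tendsto (F · x) l (𝓝 (ψ x))) {x : ℝ} (hx : x ∈ Icc a b) :
    min (ψ a) (ψ b) ≤ ψ x := by
  have ha : a ∈ Icc a b := left_mem_Icc.2 (hx.1.trans hx.2)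
  have hb : b ∈ Icc a b := right_mem_Icc.2 (hx.1.trans hx.2)
  exact le_of_tendsto_of_tendsto ((hlim a ha).min (hlim b hb)) (hlim x hx)
    (hF.mono fun _ hi ↦ hi.min_le_of_mem_Icc ha hb hx)

lemma eventually_lt_add_nhdsGT_of_concaveOn [l.NeBot] (hab : a < b)
    (hF : ∀ᶠ i in l, ConcaveOn ℝ (Icc a b) (F i))
    (hle : ∀ᶠ i in l, ∀ x ∈ Icc a b, ψ x ≤ F i x)
    (hlim : ∀ x ∈ Icc a b, Tendsto (F · x) l (𝓝 (ψ x))) {ε : ℝ} (hε : 0 < ε) :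
    ∀ᶠ p in l ×ˢ 𝓝[>] a, F p.1 p.2 < ψ p.2 + ε := by
  set c := min (ψ a) (ψ b)
  have hψ : ∀ x ∈ Icc a b, c ≤ ψ x := fun x hx ↦ min_le_of_tendsto_concaveOn hF hlim hx
  have hmono : ∀ᶠ i in l, MonotoneOn (fun y ↦ (F i y - c) / (b - y)) (Ioo a b) := by
    filter_upwards [hF, hle] with i hi hψi
    exact (monotoneOn_sub_div_sub_of_concaveOn hi
      ((min_le_right _ _).trans (hψi b (right_mem_Icc.2 hab.le)))).mono Ioo_subset_Ico_self
  have hbdd : BddBelow ((fun y ↦ (ψ y - c) / (b - y)) '' Ioo a b) :=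
    ⟨0, forall_mem_image.2 fun y hy ↦ div_nonneg (sub_nonneg.2 (hψ y (Ioo_subset_Icc_self hy)))
      (sub_nonneg.2 hy.2.le)⟩
  have hquot := eventually_lt_add_nhdsGT_of_monotoneOn hab hmono hbdd
    (fun y hy ↦ ((hlim y (Ioo_subset_Icc_self hy)).sub_const c).div_const _)
    (div_pos hε (sub_pos.2 hab))
  filter_upwards [hquot, tendsto_snd.eventually (Ioo_mem_nhdsGT hab)] with ⟨i, y⟩ hlt hy
  have hby : 0 < b - y := sub_pos.2 hy.2
  have hba : b - y ≤ b - a := sub_le_sub_left hy.1.le b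
  have hscale : ε / (b - a) * (b - y) ≤ ε := by
    rw [div_mul_eq_mul_div, div_le_iff₀ (hby.trans_le hba)]
    gcongr
  have hlt' : F i y - c < ψ y - c + ε / (b - a) * (b - y) := by
    rwa [div_add' _ _ _ hby.ne', div_lt_div_iff_of_pos_right hby] at hlt
  linarith

lemma eventually_lt_add_nhdsLT_of_concaveOn [l.NeBot] (hab : a < b)
    (hF : ∀ᶠ i in l, ConcaveOn ℝ (Icc a b) (F i))
    (hle : ∀ᶠ i in l, ∀ x ∈ Icc a b, ψ x ≤ F i x)
    (hlim : ∀ x ∈ Icc a b, Tendsto (F · x) l (𝓝 (ψ x))) {ε : ℝ} (hε : 0 < ε) :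
    ∀ᶠ p in l ×ˢ 𝓝[<] b, F p.1 p.2 < ψ p.2 + ε := by
  have hreflected := eventually_lt_add_nhdsGT_of_concaveOn (F := fun i x ↦ F i (-x))
    (ψ := fun x ↦ ψ (-x)) (neg_lt_neg hab) (hF.mono fun _ hi ↦ concaveOn_comp_neg_Icc hi)
    (hle.mono fun _ hi x hx ↦ hi _ (neg_mem_Icc_iff.2 hx))
    (fun x hx ↦ hlim _ (neg_mem_Icc_iff.2 hx)) hε
  simpa only [Prod.map, id, neg_neg] using
    (tendsto_id.prodMap (tendsto_neg_nhdsLT (a := b))).eventually hreflected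

lemma eventually_lt_add_nhdsWithin_of_concaveOn [l.NeBot]
    (hF : ∀ᶠ i in l, ConcaveOn ℝ (Icc a b) (F i))
    (hle : ∀ᶠ i in l, ∀ x ∈ Icc a b, ψ x ≤ F i x)
    (hlim : ∀ x ∈ Icc a b, Tendsto (F · x) l (𝓝 (ψ x))) {x : ℝ} (hx : x ∈ Icc a b)
    {ε : ℝ} (hε : 0 < ε) : ∀ᶠ p in l ×ˢ 𝓝[Icc a b] x, F p.1 p.2 < ψ p.2 + ε := by
  have hpoint : ∀ᶠ p in l ×ˢ pure x, F p.1 p.2 < ψ p.2 + ε := by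
    rw [prod_pure]
    exact (hlim x hx).eventually_lt_const (lt_add_of_pos_right _ hε)
  have hleft : ∀ᶠ p in l ×ˢ 𝓝[Ico a x] x, F p.1 p.2 < ψ p.2 + ε := by
    obtain rfl | hax := hx.1.eq_or_lt
    · simp
    have hsub : Icc a x ⊆ Icc a b := Icc_subset_Icc_right hx.2
    rw [nhdsWithin_Ico_eq_nhdsLT hax]
    exact eventually_lt_add_nhdsLT_of_concaveOn hax
      (hF.mono fun _ hi ↦ hi.subset hsub (convex_Icc a x))
      (hle.mono fun _ hi y hy ↦ hi y (hsub hy)) (fun y hy ↦ hlim y (hsub hy)) hε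
  have hright : ∀ᶠ p in l ×ˢ 𝓝[Ioc x b] x, F p.1 p.2 < ψ p.2 + ε := by
    obtain rfl | hxb := hx.2.eq_or_lt
    · simp
    have hsub : Icc x b ⊆ Icc a b := Icc_subset_Icc_left hx.1
    rw [nhdsWithin_Ioc_eq_nhdsGT hxb]
    exact eventually_lt_add_nhdsGT_of_concaveOn hxb
      (hF.mono fun _ hi ↦ hi.subset hsub (convex_Icc x b))
      (hle.mono fun _ hi y hy ↦ hi y (hsub hy)) (fun y hy ↦ hlim y (hsub hy)) hε
  rw [← Ico_union_Icc_eq_Icc hx.1 hx.2, ← Ioc_insert_left hx.2, nhdsWithin_union,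
    nhdsWithin_insert, prod_sup, prod_sup]
  exact eventually_sup.2 ⟨hleft, eventually_sup.2 ⟨hpoint, hright⟩⟩

theorem tendstoUniformlyOn_Icc_of_concaveOn_of_le [l.NeBot]
    (hF : ∀ᶠ i in l, ConcaveOn ℝ (Icc a b) (F i))
    (hle : ∀ᶠ i in l, ∀ x ∈ Icc a b, ψ x ≤ F i x)
    (hlim : ∀ x ∈ Icc a b, Tendsto (F · x) l (𝓝 (ψ x))) :
    TendstoUniformlyOn F ψ l (Icc a b) := by
  rw [← tendstoLocallyUniformlyOn_iff_tendstoUniformlyOn_of_compact isCompact_Icc,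
    tendstoLocallyUniformlyOn_iff_forall_tendsto]
  intro x hx
  rw [Metric.uniformity_basis_dist.tendsto_right_iff]
  intro ε hε
  filter_upwards [eventually_lt_add_nhdsWithin_of_concaveOn hF hle hlim hx hε,
    hle.prod_mk self_mem_nhdsWithin] with ⟨i, y⟩ hlt ⟨hψi, hy⟩
  rw [dist_comm, Real.dist_eq, abs_of_nonneg (sub_nonneg.2 (hψi y hy))]
  exact sub_left_lt_of_lt_add hlt

end UniformConvergence

section TropSubadditiveOn

variable {E : Type*} [AddCommGroup E] [Module ℝ E] {K : Set E} {F : ℕ → E → ℝ}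

/-- Tropical subadditivity `φ (m + n) ≤ φ m ⊗ φ n` on `K`, expressed through the functions
`F n x = φ n (n x) / n`, which share the domain `K`. The supremum defining `φ m ⊗ φ n` is encoded by
its upper bounds `B`, because `sSup` of an unbounded set of reals is `0`. -/
def TropSubadditiveOn (K : Set E) (F : ℕ → E → ℝ) : Prop :=
  ∀ m n : ℕ, 1 ≤ m → 1 ≤ n → ∀ x ∈ K, ∀ B : ℝ,
    (∀ u ∈ K, ∀ v ∈ K, (m : ℝ) • u + (n : ℝ) • v = ((m : ℝ) + n) • x →
      m * F m u + n * F n v ≤ B) →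
    ((m : ℝ) + n) * F (m + n) x ≤ B

namespace TropSubadditiveOn

lemma mul_le_mul_add (hF : TropSubadditiveOn K F) {g : E → ℝ} (hg : ConcaveOn ℝ K g) {n : ℕ}
    (hn : 1 ≤ n) (hng : ∀ x ∈ K, F n x ≤ g x) {D : ℝ}
    (hD : ∀ r ∈ Finset.Icc 1 n, ∀ x ∈ K, r * F r x ≤ r * g x + D) {N : ℕ} (hN : 1 ≤ N) :
    ∀ x ∈ K, N * F N x ≤ N * g x + D := by
  induction N using Nat.strong_induction_on with
  | h N ih =>
    obtain hNn | hnN := le_or_gt N n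
    · exact hD N (Finset.mem_Icc.2 ⟨hN, hNn⟩)
    obtain ⟨m, rfl⟩ := Nat.exists_eq_add_of_lt hnN
    intro x hx
    push_cast [add_assoc]
    refine mod_cast hF n (m + 1) hn m.succ_pos x hx _ fun u hu v hv huv ↦ ?_
    have hconc := mul_add_mul_le_of_concaveOn hg (by positivity) (by positivity) hu hv huv
    calc n * F n u + (m + 1 : ℕ) * F (m + 1) v
        ≤ n * g u + ((m + 1 : ℕ) * g v + D) := by
          gcongr
          exacts [hng u hu, ih (m + 1) (by lia) m.succ_pos v hv]
      _ ≤ _ := by push_cast at hconc ⊢; linarith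

lemma exists_le_add_div (hF : TropSubadditiveOn K F)
    (hconc : ∀ n, 1 ≤ n → ConcaveOn ℝ K (F n))
    (hbdd : ∀ n, 1 ≤ n → Bornology.IsBounded (F n '' K)) {n : ℕ} (hn : 1 ≤ n) :
    ∃ D : ℝ, ∀ N : ℕ, 1 ≤ N → ∀ x ∈ K, F N x ≤ F n x + D / N := by
  obtain ⟨c, hc⟩ := (hbdd n hn).bddBelow
  choose! C hC using fun r hr ↦ (hbdd r hr).bddAbove
  obtain ⟨D, hD⟩ := ((Finset.Icc 1 n).image fun r : ℕ ↦ r * (C r - c)).exists_le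
  have hrem : ∀ r ∈ Finset.Icc 1 n, ∀ x ∈ K, r * F r x ≤ r * F n x + D := fun r hr x hx ↦
    calc r * F r x ≤ r * C r := by
          gcongr
          exact hC r (Finset.mem_Icc.1 hr).1 (mem_image_of_mem _ hx)
      _ = r * c + r * (C r - c) := by ring
      _ ≤ r * F n x + D := by
          gcongr
          exacts [hc (mem_image_of_mem _ hx), hD _ (Finset.mem_image_of_mem _ hr)]
  refine ⟨D, fun N hN x hx ↦ ?_⟩
  have hN0 : (0 : ℝ) < N := mod_cast hN
  rw [← mul_le_mul_iff_right₀ hN0, mul_add, mul_div_cancel₀ _ hN0.ne']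
  exact hF.mul_le_mul_add (hconc n hn) hn (fun _ _ ↦ le_rfl) hrem hN x hx

theorem tendsto_of_isGLB (hF : TropSubadditiveOn K F)
    (hconc : ∀ n, 1 ≤ n → ConcaveOn ℝ K (F n))
    (hbdd : ∀ n, 1 ≤ n → Bornology.IsBounded (F n '' K)) {x : E} (hx : x ∈ K) {L : ℝ}
    (hL : IsGLB {y | ∃ n, 1 ≤ n ∧ y = F n x} L) : Tendsto (F · x) atTop (𝓝 L) := by
  refine tendsto_order.2 ⟨fun y hy ↦ ?_, fun y hy ↦ ?_⟩
  · filter_upwards [eventually_ge_atTop 1] with N hN using hy.trans_le (hL.1 ⟨N, hN, rfl⟩)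
  · obtain ⟨_, ⟨n, hn, rfl⟩, hny⟩ := (isGLB_lt_iff hL).1 hy
    obtain ⟨D, hD⟩ := hF.exists_le_add_div hconc hbdd hn
    have hlim : Tendsto (fun N : ℕ ↦ F n x + D / N) atTop (𝓝 (F n x)) := by
      simpa using (tendsto_const_div_atTop_nhds_zero_nat D).const_add (F n x)
    filter_upwards [hlim.eventually_lt_const hny, eventually_ge_atTop 1] with N hlt hN
      using (hD N hN x hx).trans_lt hlt

end TropSubadditiveOn

end TropSubadditiveOn

section Normalized

variable {φ : ℕ → ℝ → ℝ} {h : ℝ}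

/-- The function `x ↦ φ_n(n x) / n`, which carries `φ_n` from `[0, n h]` to `[0, h]`.
It is `0` for `n = 0`. -/
noncomputable def normalized (φ : ℕ → ℝ → ℝ) (n : ℕ) (x : ℝ) : ℝ :=
  (1 / (n : ℝ)) * φ n ((n : ℝ) * x)

lemma mul_normalized {n : ℕ} (hn : 1 ≤ n) (x : ℝ) : n * normalized φ n x = φ n (n * x) := by
  have hn0 : (n : ℝ) ≠ 0 := by positivity
  rw [normalized, ← mul_assoc, mul_one_div_cancel hn0, one_mul]

lemma tropConv_le {h₁ h₂ x B : ℝ} {f g : ℝ → ℝ} (hh₁ : 0 ≤ h₁) (hh₂ : 0 ≤ h₂)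
    (hx : x ∈ Icc 0 (h₁ + h₂))
    (hB : ∀ a ∈ Icc 0 h₁, ∀ b ∈ Icc 0 h₂, a + b = x → f a + g b ≤ B) :
    tropConv h₁ h₂ f g x ≤ B := by
  refine csSup_le ?_ ?_
  · refine ⟨_, min x h₁, x - min x h₁, le_min hx.1 hh₁, min_le_right _ _,
      sub_nonneg.2 (min_le_left _ _), ?_, add_sub_cancel _ _, rfl⟩
    obtain hxh | hhx := le_total x h₁
    · simpa only [min_eq_left hxh, sub_self] using hh₂
    · simpa only [min_eq_right hhx] using sub_left_le_of_le_add hx.2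
  · rintro _ ⟨a, b, ha0, ha, hb0, hb, hab, rfl⟩
    exact hB a ⟨ha0, ha⟩ b ⟨hb0, hb⟩ hab

lemma concaveOn_normalized {n : ℕ} (hn : 1 ≤ n) (hφ : ConcaveOn ℝ (Icc 0 (n * h)) (φ n)) :
    ConcaveOn ℝ (Icc 0 h) (normalized φ n) := by
  have hn0 : (0 : ℝ) < n := mod_cast hn
  have hpre : (LinearMap.mulLeft ℝ (n : ℝ)) ⁻¹' Icc 0 (n * h) = Icc 0 h := by
    ext x
    simp [hn0, mul_le_mul_iff_right₀ hn0]
  rw [← hpre]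
  exact (hφ.comp_linearMap (LinearMap.mulLeft ℝ (n : ℝ))).smul (one_div_nonneg.2 hn0.le)

lemma normalized_nonneg {n : ℕ} (hφ : ∀ x ∈ Icc 0 (n * h), 0 ≤ φ n x) {x : ℝ} (hx : x ∈ Icc 0 h) :
    0 ≤ normalized φ n x :=
  mul_nonneg (one_div_nonneg.2 n.cast_nonneg)
    (hφ _ ⟨mul_nonneg n.cast_nonneg hx.1, mul_le_mul_of_nonneg_left hx.2 n.cast_nonneg⟩)

lemma tropSubadditiveOn_normalized
    (hsub : ∀ n : ℕ, 1 ≤ n → ∀ m : ℕ, 1 ≤ m → ∀ x ∈ Icc (0 : ℝ) (((n : ℝ) + m) * h),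
      φ (n + m) x ≤ tropConv (n * h) (m * h) (φ n) (φ m) x) :
    TropSubadditiveOn (Icc 0 h) (normalized φ) := by
  intro m n hm hn x hx B hB
  have hm0 : (0 : ℝ) < m := mod_cast hm
  have hn0 : (0 : ℝ) < n := mod_cast hn
  have hh : 0 ≤ h := hx.1.trans hx.2
  have hmem : ((m : ℝ) + n) * x ∈ Icc 0 (((m : ℝ) + n) * h) :=
    ⟨mul_nonneg (by positivity) hx.1, by gcongr; exact hx.2⟩
  have hφ : ((m : ℝ) + n) * normalized φ (m + n) x = φ (m + n) ((m + n) * x) :=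
    mod_cast mul_normalized (φ := φ) (hm.trans (Nat.le_add_right m n)) x
  have hdiv : ∀ {k : ℕ} {a : ℝ}, (0 : ℝ) < k → a ∈ Icc 0 (k * h) → a / k ∈ Icc 0 h :=
    fun hk ha ↦ ⟨div_nonneg ha.1 hk.le, (div_le_iff₀' hk).2 ha.2⟩
  rw [hφ]
  refine (hsub m hm n hn _ hmem).trans <| tropConv_le (by positivity) (by positivity)
    (by rwa [← add_mul]) fun a ha b hb hab ↦ ?_
  have hdecomp := hB (a / m) (hdiv hm0 ha) (b / n) (hdiv hn0 hb) (by
    rw [smul_eq_mul, smul_eq_mul, smul_eq_mul, mul_div_cancel₀ _ hm0.ne',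
      mul_div_cancel₀ _ hn0.ne', hab])
  rwa [mul_normalized hm, mul_normalized hn, mul_div_cancel₀ _ hm0.ne',
    mul_div_cancel₀ _ hn0.ne'] at hdecomp

end Normalized

theorem phi_tendstoUniformly_general (h : ℝ) (φ : ℕ → ℝ → ℝ)
    (hconc : ∀ n : ℕ, 1 ≤ n → ConcaveOn ℝ (Set.Icc 0 ((n : ℝ) * h)) (φ n))
    (hbelow : ∀ x ∈ Set.Icc (0 : ℝ) h,
      BddBelow {y | ∃ n : ℕ, 1 ≤ n ∧ y = (1 / (n : ℝ)) * φ n ((n : ℝ) * x)})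
    (hsub : ∀ n : ℕ, 1 ≤ n → ∀ m : ℕ, 1 ≤ m →
      ∀ x ∈ Set.Icc (0 : ℝ) (((n : ℝ) + (m : ℝ)) * h),
        φ (n + m) x ≤ tropConv ((n : ℝ) * h) ((m : ℝ) * h) (φ n) (φ m) x) :
    ∃ ψ : ℝ → ℝ,
      ConcaveOn ℝ (Set.Icc 0 h) ψ ∧
      (∀ x ∈ Set.Icc (0 : ℝ) h,
        ψ x = sInf {y | ∃ n : ℕ, 1 ≤ n ∧ y = (1 / (n : ℝ)) * φ n ((n : ℝ) * x)}) ∧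
      TendstoUniformlyOn (fun (n : ℕ) (x : ℝ) => (1 / (n : ℝ)) * φ n ((n : ℝ) * x)) ψ
        Filter.atTop (Set.Icc 0 h) := by
  let ψ : ℝ → ℝ := fun x ↦ sInf {y | ∃ n : ℕ, 1 ≤ n ∧ y = normalized φ n x}
  have hconcF : ∀ n, 1 ≤ n → ConcaveOn ℝ (Icc 0 h) (normalized φ n) := fun n hn ↦
    concaveOn_normalized hn (hconc n hn)
  have hψ : ∀ x ∈ Icc 0 h, IsGLB {y | ∃ n : ℕ, 1 ≤ n ∧ y = normalized φ n x} (ψ x) :=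
    fun x hx ↦ isGLB_csInf ⟨_, 1, le_rfl, rfl⟩ (hbelow x hx)
  have hlim : ∀ x ∈ Icc 0 h, Tendsto (normalized φ · x) atTop (𝓝 (ψ x)) := fun x hx ↦
    (tropSubadditiveOn_normalized hsub).tendsto_of_isGLB hconcF
      (fun n hn ↦ isBounded_image_Icc_of_concaveOn (hconcF n hn)) hx (hψ x hx)
  refine ⟨ψ, concaveOn_of_isGLB (convex_Icc 0 h) hconcF hψ, fun _ _ ↦ rfl,
    tendstoUniformlyOn_Icc_of_concaveOn_of_le ((eventually_ge_atTop 1).mono hconcF) ?_ hlim⟩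
  filter_upwards [eventually_ge_atTop 1] with n hn x hx using (hψ x hx).1 ⟨n, hn, rfl⟩

/-- For a sequence of bounded concave nonnegative functions `φ_n : [0, nh] → [0,∞)`
satisfying `φ_{n+m} ≤ φ_n ⊗ φ_m`, the functions `x ↦ (1/n) φ_n(nx)` converge
uniformly on `[0,h]` to a concave function equal to their pointwise infimum. -/
theorem phi_tendstoUniformly (h : ℝ) (hh : 0 < h) (φ : ℕ → ℝ → ℝ)
    (hconc : ∀ n : ℕ, 1 ≤ n → ConcaveOn ℝ (Set.Icc 0 ((n : ℝ) * h)) (φ n))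
    (hnonneg : ∀ n : ℕ, 1 ≤ n → ∀ x ∈ Set.Icc (0 : ℝ) ((n : ℝ) * h), 0 ≤ φ n x)
    (hbdd : ∀ n : ℕ, 1 ≤ n → ∃ C : ℝ, ∀ x ∈ Set.Icc (0 : ℝ) ((n : ℝ) * h), φ n x ≤ C)
    (hsub : ∀ n : ℕ, 1 ≤ n → ∀ m : ℕ, 1 ≤ m →
      ∀ x ∈ Set.Icc (0 : ℝ) (((n : ℝ) + (m : ℝ)) * h),
        φ (n + m) x ≤ tropConv ((n : ℝ) * h) ((m : ℝ) * h) (φ n) (φ m) x) :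
    ∃ ψ : ℝ → ℝ,
      ConcaveOn ℝ (Set.Icc 0 h) ψ ∧
      (∀ x ∈ Set.Icc (0 : ℝ) h,
        ψ x = sInf {y | ∃ n : ℕ, 1 ≤ n ∧ y = (1 / (n : ℝ)) * φ n ((n : ℝ) * x)}) ∧
      TendstoUniformlyOn (fun (n : ℕ) (x : ℝ) => (1 / (n : ℝ)) * φ n ((n : ℝ) * x)) ψ
        Filter.atTop (Set.Icc 0 h) :=
  phi_tendstoUniformly_general h φ hconc (fun _ hx ↦
    ⟨0, by rintro _ ⟨n, hn, rfl⟩; exact normalized_nonneg (hnonneg n hn) hx⟩) hsub
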